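/- arXiv:1910.04401 — 2 statements merged into one kernel-verified Lean document; each statement's English description precedes it below -/
import Mathlib

section
/- In every matching market there exists a man-optimal stable matching: a stable matching μ0 such that for every stable matching μ and every man m, μ0(m) ⪰_m μ(m). -/
/-- A matching market: men `M` and women `W`; each man has a strict preference
order over `W ∪ {∅}` and each woman over `M ∪ {∅}`, encoded by injective rank
functions (a strictly higher rank means strictly more preferred); `none`
plays the role of `∅` (being unmatched), and partners ranked below `none`
are unacceptable. -/
structure Market (M W : Type*) where
  mRank : M → Option W → ℕ
  wRank : W → Option M → ℕ
  mRank_inj : ∀ m, Function.Injective (mRank m)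
  wRank_inj : ∀ w, Function.Injective (wRank w)

/-- A matching: `mu` assigns each man a woman or `none`, `nu` assigns each
woman a man or `none`, and `μ(m) = w ↔ μ(w) = m`. -/
structure Matching (M W : Type*) where
  mu : M → Option W
  nu : W → Option M
  consistent : ∀ m w, mu m = some w ↔ nu w = some m

variable {M W : Type*}

/-- Every matched agent prefers their partner to `∅`. -/
def Market.IndivRational (mkt : Market M W) (μ : Matching M W) : Prop :=
  (∀ m w, μ.mu m = some w → mkt.mRank m none < mkt.mRank m (some w)) ∧
  (∀ w m, μ.nu w = some m → mkt.wRank w none < mkt.wRank w (some m))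

/-- `(m, w)` is a blocking pair for `μ`: they are not matched to each other,
`w ≻_m μ(m)` and `m ≻_w μ(w)`. -/
def Market.Blocking (mkt : Market M W) (μ : Matching M W) (m : M) (w : W) : Prop :=
  μ.mu m ≠ some w ∧
  mkt.mRank m (μ.mu m) < mkt.mRank m (some w) ∧
  mkt.wRank w (μ.nu w) < mkt.wRank w (some m)

/-- A matching is stable if it is individually rational and has no blocking pair. -/
def Market.Stable (mkt : Market M W) (μ : Matching M W) : Prop :=
  mkt.IndivRational μ ∧ ∀ m w, ¬ mkt.Blocking μ m w

/-- Woman-dominance: `μ ≥ μ'` iff every woman weakly prefers her partner in `μ`. -/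
def Market.Dom (mkt : Market M W) (μ μ' : Matching M W) : Prop :=
  ∀ w, mkt.wRank w (μ'.nu w) ≤ mkt.wRank w (μ.nu w)

/-- Strict woman-dominance: `μ > μ'`. -/
def Market.StrictDom (mkt : Market M W) (μ μ' : Matching M W) : Prop :=
  mkt.Dom μ μ' ∧ μ ≠ μ'

/-- `μ'` covers `μ` in the woman-dominance order on stable matchings. -/
def Market.Covers (mkt : Market M W) (μ' μ : Matching M W) : Prop :=
  mkt.StrictDom μ' μ ∧
  ¬ ∃ μ'' : Matching M W, mkt.Stable μ'' ∧ mkt.StrictDom μ' μ'' ∧ mkt.StrictDom μ'' μ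

/-- `μ'` is the elimination of the list `ρ = [(w_0,m_0),…,(w_{k-1},m_{k-1})]`
from `μ`: `k ≥ 2`, the women (resp. men) in `ρ` are distinct, `μ(w_i) = m_i`,
`μ'(m_i) = w_{(i+1) mod k}`, and every agent not appearing in `ρ` has the same
partner in `μ` and `μ'`. -/
def Matching.IsElimOf (μ' μ : Matching M W) (ρ : List (W × M)) : Prop :=
  2 ≤ ρ.length ∧
  (ρ.map Prod.fst).Nodup ∧ (ρ.map Prod.snd).Nodup ∧
  (∀ i : Fin ρ.length, μ.nu (ρ.get i).1 = some (ρ.get i).2) ∧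
  (∀ i : Fin ρ.length, μ'.mu (ρ.get i).2 =
    some (ρ.get ⟨(i.1 + 1) % ρ.length,
      Nat.mod_lt _ (Nat.lt_of_le_of_lt (Nat.zero_le _) i.isLt)⟩).1) ∧
  (∀ m : M, m ∉ ρ.map Prod.snd → μ'.mu m = μ.mu m) ∧
  (∀ w : W, w ∉ ρ.map Prod.fst → μ'.nu w = μ.nu w)

/-- `ρ` is a rotation exposed in `μ`: the elimination of `ρ` from `μ` is a
stable matching which covers `μ`. -/
def Market.ExposedRotation (mkt : Market M W) (μ : Matching M W) (ρ : List (W × M)) : Prop :=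
  ∃ μ' : Matching M W, Matching.IsElimOf μ' μ ρ ∧ mkt.Stable μ' ∧ mkt.Covers μ' μ

/-- `ρ` belongs to the set `Π` of all rotations, i.e. it is exposed in some
stable matching. -/
def Market.InPi (mkt : Market M W) (ρ : List (W × M)) : Prop :=
  ∃ μ : Matching M W, mkt.Stable μ ∧ mkt.ExposedRotation μ ρ

/-- The cyclically next index in a rotation. -/
def RotNext (ρ : List (W × M)) (i : Fin ρ.length) : Fin ρ.length :=
  ⟨(i.1 + 1) % ρ.length, Nat.mod_lt _ (Nat.lt_of_le_of_lt (Nat.zero_le _) i.isLt)⟩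

/-- The cyclically previous index in a rotation. -/
def RotPrev (ρ : List (W × M)) (i : Fin ρ.length) : Fin ρ.length :=
  ⟨(i.1 + ρ.length - 1) % ρ.length, Nat.mod_lt _ (Nat.lt_of_le_of_lt (Nat.zero_le _) i.isLt)⟩

/-- `ρ` moves man `m` from `w` to `w'` (i.e. `m = m_i`, `w = w_i`, `w' = w_{i+1}`). -/
def MovesManFromTo (ρ : List (W × M)) (m : M) (w w' : W) : Prop :=
  ∃ i : Fin ρ.length, (ρ.get i).2 = m ∧ (ρ.get i).1 = w ∧ (ρ.get (RotNext ρ i)).1 = w'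

/-- `ρ` moves woman `w` from `m` to `m'` (i.e. `w = w_i`, `m = m_i`, `m' = m_{i-1}`). -/
def MovesWomanFromTo (ρ : List (W × M)) (w : W) (m m' : M) : Prop :=
  ∃ i : Fin ρ.length, (ρ.get i).1 = w ∧ (ρ.get i).2 = m ∧ (ρ.get (RotPrev ρ i)).2 = m'

/-- `ρ1` is a type 1 predecessor of `ρ2`: `ρ1` moves some man `m` to a woman
`w` and the pair `(w, m)` appears in `ρ2`. -/
def Market.Type1Pred (_mkt : Market M W) (ρ1 ρ2 : List (W × M)) : Prop :=
  ∃ (w : W) (m : M), (∃ w0 : W, MovesManFromTo ρ1 m w0 w) ∧ (w, m) ∈ ρ2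

/-- `ρ1` is a type 2 predecessor of `ρ2`: `ρ1` moves some woman `w` from a man
strictly below `m` to a man strictly above `m`, and `ρ2` moves `m` from a woman
strictly above `w` to a woman strictly below `w`. -/
def Market.Type2Pred (mkt : Market M W) (ρ1 ρ2 : List (W × M)) : Prop :=
  ∃ (m : M) (w : W) (mlo mhi : M) (whi wlo : W),
    MovesWomanFromTo ρ1 w mlo mhi ∧
    mkt.wRank w (some mlo) < mkt.wRank w (some m) ∧
    mkt.wRank w (some m) < mkt.wRank w (some mhi) ∧
    MovesManFromTo ρ2 m whi wlo ∧
    mkt.mRank m (some wlo) < mkt.mRank m (some w) ∧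
    mkt.mRank m (some w) < mkt.mRank m (some whi)

/-- `ρ1` is a (type 1 or type 2) predecessor of `ρ2`; these are the edges of
the predecessor graph `G(Π)`. -/
def Market.Pred (mkt : Market M W) (ρ1 ρ2 : List (W × M)) : Prop :=
  mkt.Type1Pred ρ1 ρ2 ∨ mkt.Type2Pred ρ1 ρ2

/-- `σ` assigns each woman the more preferred of her partners in `μ` and `μ'`. -/
def Market.IsJoin (mkt : Market M W) (μ μ' σ : Matching M W) : Prop :=
  ∀ w, σ.nu w = if mkt.wRank w (μ'.nu w) ≤ mkt.wRank w (μ.nu w) then μ.nu w else μ'.nu w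

/-- `σ` assigns each woman the less preferred of her partners in `μ` and `μ'`. -/
def Market.IsMeet (mkt : Market M W) (μ μ' σ : Matching M W) : Prop :=
  ∀ w, σ.nu w = if mkt.wRank w (μ.nu w) ≤ mkt.wRank w (μ'.nu w) then μ.nu w else μ'.nu w

/-!
Deferred acceptance, seen as a fixed point. A set `R` of rejected pairs determines the proposals
made so far: `m` has proposed to `w` once every option he strictly prefers to `w` is in `R`. The
proposals in turn determine who is rejected: `w` rejects `m` once she strictly prefers `∅` or one
of her proposers. Both maps are monotone. At a fixed point `R`, let each man take his best option
outside `R` and each woman her best option among her proposers: `m` takes `w` iff he has proposed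
to her and `(m, w) ∉ R`, which is also the condition for `w` to take `m`, and the matching so
obtained is stable. Pairs that belong to no stable matching are closed under rejection, so the
least fixed point contains only such pairs, and the men lose nothing by giving them up.
-/

/-- The choices open to an agent to whom the partners in `S` are available: these partners, and
remaining unmatched. -/
def choiceSet {α : Type*} (S : Set α) : Set (Option α) :=
  insert none (some '' S)

section BestChoice

variable {α β : Type*} {S T : Set α} {a : α}

theorem none_mem_choiceSet : none ∈ choiceSet S :=
  Set.mem_insert _ _

theorem some_mem_choiceSet : some a ∈ choiceSet S ↔ a ∈ S := by
  simp [choiceSet]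

theorem choiceSet_mono (h : S ⊆ T) : choiceSet S ⊆ choiceSet T :=
  Set.insert_subset_insert (Set.image_mono h)

variable [Finite α] [LinearOrder β]

theorem exists_best_mem_choiceSet (rank : Option α → β) (S : Set α) :
    ∃ o ∈ choiceSet S, ∀ o' ∈ choiceSet S, rank o' ≤ rank o :=
  Set.exists_max_image _ rank (Set.toFinite _) ⟨none, none_mem_choiceSet⟩

/-- The choice of highest rank for an agent to whom the partners in `S` are available. -/
noncomputable def bestChoice (rank : Option α → β) (S : Set α) : Option α :=
  (exists_best_mem_choiceSet rank S).choose

theorem bestChoice_mem (rank : Option α → β) (S : Set α) : bestChoice rank S ∈ choiceSet S :=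
  (exists_best_mem_choiceSet rank S).choose_spec.1

theorem rank_le_rank_bestChoice (rank : Option α → β) {o : Option α} (ho : o ∈ choiceSet S) :
    rank o ≤ rank (bestChoice rank S) :=
  (exists_best_mem_choiceSet rank S).choose_spec.2 o ho

theorem bestChoice_eq_some_iff {rank : Option α → β} (hrank : Function.Injective rank) :
    bestChoice rank S = some a ↔ a ∈ S ∧ ∀ o ∈ choiceSet S, rank o ≤ rank (some a) := by
  constructor
  · intro h
    exact ⟨some_mem_choiceSet.1 (h ▸ bestChoice_mem rank S),
      fun o ho => h ▸ rank_le_rank_bestChoice rank ho⟩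
  · rintro ⟨haS, hmax⟩
    exact hrank ((hmax _ (bestChoice_mem rank S)).antisymm
      (rank_le_rank_bestChoice rank (some_mem_choiceSet.2 haS)))

theorem rank_none_lt_of_bestChoice_eq_some {rank : Option α → β}
    (hrank : Function.Injective rank) (h : bestChoice rank S = some a) :
    rank none < rank (some a) :=
  (((bestChoice_eq_some_iff hrank).1 h).2 none none_mem_choiceSet).lt_of_ne
    (hrank.ne (Option.some_ne_none a).symm)

end BestChoice

namespace Market

/-- The proposals made once the pairs in `R` are rejected: `m` has proposed to `w` when no choice
still open to him is better than `w`. The pair `(m, w)` itself may lie in `R`. -/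
def proposals (mkt : Market M W) (R : Set (M × W)) : Set (M × W) :=
  {x | ∀ o ∈ choiceSet {w | (x.1, w) ∉ R}, mkt.mRank x.1 o ≤ mkt.mRank x.1 (some x.2)}

/-- The rejections caused by the proposals in `P`: `w` rejects `m` when she prefers being unmatched
or one of her proposers, whether or not `m` has proposed to her. -/
def rejections (mkt : Market M W) (P : Set (M × W)) : Set (M × W) :=
  {x | ∃ o ∈ choiceSet {m | (m, x.2) ∈ P}, mkt.wRank x.2 (some x.1) < mkt.wRank x.2 o}

/-- The pairs that are matched in no stable matching. -/
def unachievable (mkt : Market M W) : Set (M × W) :=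
  {x | ∀ μ : Matching M W, mkt.Stable μ → μ.mu x.1 ≠ some x.2}

variable {mkt : Market M W} {μ : Matching M W} {R : Set (M × W)} {m : M} {w : W}

theorem proposals_mono : Monotone mkt.proposals :=
  fun _ _ hR _ hx o ho => hx o (choiceSet_mono (Set.compl_subset_compl.2 (Set.preimage_mono hR)) ho)

theorem rejections_mono : Monotone mkt.rejections :=
  fun _ _ hP _ ⟨o, ho, hlt⟩ => ⟨o, choiceSet_mono (Set.preimage_mono hP) ho, hlt⟩

/-- One round of deferred acceptance, acting on the set of rejected pairs. -/
def deferredAcceptance (mkt : Market M W) : Set (M × W) →o Set (M × W) where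
  toFun R := mkt.rejections (mkt.proposals R)
  monotone' := rejections_mono.comp proposals_mono

theorem IndivRational.wRank_none_le (hμ : mkt.IndivRational μ) (w : W) :
    mkt.wRank w none ≤ mkt.wRank w (μ.nu w) := by
  cases h : μ.nu w with
  | none => exact le_rfl
  | some m => exact (hμ.2 w m h).le

theorem Stable.mu_mem_choiceSet (hμ : mkt.Stable μ) (hR : R ⊆ mkt.unachievable) (m : M) :
    μ.mu m ∈ choiceSet {w | (m, w) ∉ R} := by
  cases h : μ.mu m with
  | none => exact none_mem_choiceSet
  | some w => exact some_mem_choiceSet.2 fun hmw => hR hmw μ hμ h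

theorem Stable.wRank_proposer_le (hμ : mkt.Stable μ) (hR : R ⊆ mkt.unachievable)
    (hmw : (m, w) ∈ mkt.proposals R) : mkt.wRank w (some m) ≤ mkt.wRank w (μ.nu w) := by
  by_cases hmatched : μ.mu m = some w
  · rw [(μ.consistent m w).1 hmatched]
  · have hprefers : mkt.mRank m (μ.mu m) < mkt.mRank m (some w) :=
      (hmw _ (hμ.mu_mem_choiceSet hR m)).lt_of_ne ((mkt.mRank_inj m).ne hmatched)
    exact not_lt.1 fun hlt => hμ.2 m w ⟨hmatched, hprefers, hlt⟩

theorem deferredAcceptance_unachievable_le :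
    mkt.deferredAcceptance mkt.unachievable ≤ mkt.unachievable := by
  rintro ⟨m, w⟩ ⟨o, ho, hlt⟩ μ hμ hmatched
  have hbest : mkt.wRank w o ≤ mkt.wRank w (some m) := by
    rw [← (μ.consistent m w).1 hmatched]
    cases o with
    | none => exact hμ.1.wRank_none_le w
    | some m' =>
      have hproposer : (m', w) ∈ mkt.proposals mkt.unachievable :=
        (some_mem_choiceSet (a := m')).1 ho
      exact hμ.wRank_proposer_le subset_rfl hproposer
  exact hlt.not_ge hbest

section FixedPoint

variable [Finite M] [Finite W]

/-- The outcome of deferred acceptance at a fixed point `R`: each man gets his best choice among the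
women with whom he is not rejected, each woman her best choice among her proposers. -/
noncomputable def fixedPointMatching (mkt : Market M W) (R : Set (M × W))
    (hR : mkt.deferredAcceptance R = R) : Matching M W where
  mu m := bestChoice (mkt.mRank m) {w | (m, w) ∉ R}
  nu w := bestChoice (mkt.wRank w) {m | (m, w) ∈ mkt.proposals R}
  consistent m w := by
    have hnotMem : (m, w) ∉ R ↔
        ∀ o ∈ choiceSet {m | (m, w) ∈ mkt.proposals R},
          mkt.wRank w o ≤ mkt.wRank w (some m) := by
      nth_rw 1 [← hR]
      simp [deferredAcceptance, rejections]
    rw [bestChoice_eq_some_iff (mkt.mRank_inj m), bestChoice_eq_some_iff (mkt.wRank_inj w),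
      ← hnotMem]
    exact and_comm

theorem fixedPointMatching_stable (hR : mkt.deferredAcceptance R = R) :
    mkt.Stable (mkt.fixedPointMatching R hR) := by
  refine ⟨⟨fun m w => rank_none_lt_of_bestChoice_eq_some (mkt.mRank_inj m),
    fun w m => rank_none_lt_of_bestChoice_eq_some (mkt.wRank_inj w)⟩, ?_⟩
  rintro m w ⟨-, hm, hw⟩
  have hrejected : (m, w) ∈ R := by
    by_contra hmw
    exact hm.not_ge (rank_le_rank_bestChoice _ (some_mem_choiceSet.2 hmw))
  rw [← hR] at hrejected
  obtain ⟨o, ho, hlt⟩ := hrejected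
  exact (hlt.trans_le (rank_le_rank_bestChoice _ ho)).not_gt hw

theorem Stable.mRank_le_fixedPointMatching (hμ : mkt.Stable μ)
    (hR : mkt.deferredAcceptance R = R) (hunach : R ⊆ mkt.unachievable) (m : M) :
    mkt.mRank m (μ.mu m) ≤ mkt.mRank m ((mkt.fixedPointMatching R hR).mu m) :=
  rank_le_rank_bestChoice _ (hμ.mu_mem_choiceSet hunach m)

end FixedPoint

end Market

/-- In every matching market there exists a man-optimal stable
matching: a stable matching `μ0` such that for every stable matching `μ` and
every man `m`, `μ0(m) ⪰_m μ(m)`. -/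
theorem exists_man_optimal_stable_matching {M W : Type*} [Fintype M] [Fintype W]
    (mkt : Market M W) :
    ∃ μ0 : Matching M W, mkt.Stable μ0 ∧
      ∀ μ : Matching M W, mkt.Stable μ →
        ∀ m : M, mkt.mRank m (μ.mu m) ≤ mkt.mRank m (μ0.mu m) := by
  have hfixed := mkt.deferredAcceptance.map_lfp
  have hunachievable := mkt.deferredAcceptance.lfp_le Market.deferredAcceptance_unachievable_le
  exact ⟨mkt.fixedPointMatching _ hfixed, Market.fixedPointMatching_stable hfixed,
    fun _ hμ => hμ.mRank_le_fixedPointMatching hfixed hunachievable⟩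
end

section
/- Rural hospital theorem (one-to-one case): for any two stable matchings μ and μ' of the same matching market, every agent (man or woman) is unmatched in μ if and only if they are unmatched in μ'. -/
variable {M W : Type*}

/-!
Suppose the men in `A` strictly prefer `μ'` to `μ` and the women in `B` strictly prefer `μ` to `μ'`.
A man in `A` has a partner in `μ'`, who must lie in `B`, as otherwise the two would block `μ`;
dually, the partner in `μ` of a woman in `B` lies in `A`. So `μ'` injects `A` into `B` and `μ`
injects `B` into `A`, and when these sets are finite both maps are bijections. Thus every man in `A`
is matched in `μ`; but a man unmatched in `μ` and matched in `μ'` would belong to `A`.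
-/

open Set

namespace Matching

variable {μ μ' : Matching M W} {s : Set M} {t : Set W}

/-- The matching `μ` seen from the other side of the market, so that facts about men transfer to
women. -/
def swap (μ : Matching M W) : Matching W M where
  mu := μ.nu
  nu := μ.mu
  consistent w m := (μ.consistent m w).symm

theorem injOn_mu (h : MapsTo μ.mu s (some '' t)) : InjOn μ.mu s := by
  intro m hm m' _ heq
  obtain ⟨w, -, hw⟩ := h hm
  have hwm : μ.nu w = some m := (μ.consistent m w).1 hw.symm
  have hwm' : μ.nu w = some m' := (μ.consistent m' w).1 (heq.symm.trans hw.symm)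
  exact Option.some_injective M (hwm.symm.trans hwm')

theorem finite_of_mapsTo_mu (h : MapsTo μ.mu s (some '' t)) (ht : t.Finite) : s.Finite :=
  Finite.of_injOn h (injOn_mu h) (ht.image some)

theorem ncard_le_of_mapsTo_mu (h : MapsTo μ.mu s (some '' t)) (ht : t.Finite) :
    s.ncard ≤ t.ncard :=
  calc
    s.ncard ≤ (some '' t).ncard := ncard_le_ncard_of_injOn μ.mu h (injOn_mu h) (ht.image some)
    _ = t.ncard := ncard_image_of_injective t (Option.some_injective W)

theorem finite_nu_ne_none (h : {m | μ.mu m ≠ none}.Finite) : {w | μ.nu w ≠ none}.Finite := by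
  refine finite_of_mapsTo_mu (μ := μ.swap) (fun w hw ↦ ?_) h
  obtain ⟨m, hm⟩ := Option.ne_none_iff_exists.1 hw
  have hmw : μ.mu m = some w := (μ.consistent m w).2 hm.symm
  exact ⟨m, Option.ne_none_iff_exists'.2 ⟨w, hmw⟩, hm⟩

theorem surjOn_nu_of_mapsTo (hst : MapsTo μ'.mu s (some '' t)) (hts : MapsTo μ.nu t (some '' s))
    (ht : t.Finite) : SurjOn μ.nu t (some '' s) := by
  have hs : s.Finite := finite_of_mapsTo_mu hst ht
  have hinj : InjOn μ.nu t := injOn_mu (μ := μ.swap) hts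
  have hcard : (some '' s).ncard ≤ (μ.nu '' t).ncard :=
    calc
      (some '' s).ncard = s.ncard := ncard_image_of_injective s (Option.some_injective M)
      _ ≤ t.ncard := ncard_le_of_mapsTo_mu hst ht
      _ = (μ.nu '' t).ncard := hinj.ncard_image.symm
  exact (eq_of_subset_of_ncard_le hts.image_subset hcard (hs.image some)).ge

end Matching

namespace Market

variable {mkt : Market M W} {μ μ' : Matching M W}

/-- The market with the roles of men and women exchanged, so that facts about men transfer to
women. -/
def swap (mkt : Market M W) : Market W M where
  mRank := mkt.wRank
  wRank := mkt.mRank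
  mRank_inj := mkt.wRank_inj
  wRank_inj := mkt.mRank_inj

/-- The set of men who strictly prefer their partner in `μ` to their partner in `μ'`, being
unmatched counting as the partner `none`. -/
def menPreferring (mkt : Market M W) (μ μ' : Matching M W) : Set M :=
  {m | mkt.mRank m (μ'.mu m) < mkt.mRank m (μ.mu m)}

/-- The set of women who strictly prefer their partner in `μ` to their partner in `μ'`, being
unmatched counting as the partner `none`. -/
def womenPreferring (mkt : Market M W) (μ μ' : Matching M W) : Set W :=
  {w | mkt.wRank w (μ'.nu w) < mkt.wRank w (μ.nu w)}

theorem Stable.swap (h : mkt.Stable μ) : mkt.swap.Stable μ.swap :=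
  ⟨h.1.symm, fun w m ⟨hne, hw, hm⟩ ↦ h.2 m w ⟨fun heq ↦ hne ((μ.consistent m w).1 heq), hm, hw⟩⟩

theorem IndivRational.mRank_none_le (h : mkt.IndivRational μ) (m : M) :
    mkt.mRank m none ≤ mkt.mRank m (μ.mu m) := by
  cases hm : μ.mu m with
  | none => rfl
  | some w => exact (h.1 m w hm).le

theorem Stable.wRank_lt_of_mRank_lt (h : mkt.Stable μ) {m : M} {w : W}
    (hm : mkt.mRank m (μ.mu m) < mkt.mRank m (some w)) :
    mkt.wRank w (some m) < mkt.wRank w (μ.nu w) := by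
  have hne : μ.mu m ≠ some w := fun heq ↦ hm.ne (congrArg (mkt.mRank m) heq)
  have hle : mkt.wRank w (some m) ≤ mkt.wRank w (μ.nu w) :=
    not_lt.1 fun hw ↦ h.2 m w ⟨hne, hm, hw⟩
  exact hle.lt_of_ne fun heq ↦ hne ((μ.consistent m w).2 (mkt.wRank_inj w heq).symm)

theorem Stable.mapsTo_mu (h : mkt.Stable μ) (μ' : Matching M W) :
    MapsTo μ'.mu (mkt.menPreferring μ' μ) (some '' mkt.womenPreferring μ μ') := by
  intro m (hm : mkt.mRank m (μ.mu m) < mkt.mRank m (μ'.mu m))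
  cases hw : μ'.mu m with
  | none => exact absurd (hw ▸ hm) (h.1.mRank_none_le m).not_gt
  | some w =>
    refine mem_image_of_mem some (?_ : mkt.wRank w (μ'.nu w) < mkt.wRank w (μ.nu w))
    rw [(μ'.consistent m w).1 hw]
    exact h.wRank_lt_of_mRank_lt (hw ▸ hm)

theorem Stable.mapsTo_nu (h : mkt.Stable μ) (μ' : Matching M W) :
    MapsTo μ'.nu (mkt.womenPreferring μ' μ) (some '' mkt.menPreferring μ μ') :=
  h.swap.mapsTo_mu μ'.swap

theorem IndivRational.mem_menPreferring (h : mkt.IndivRational μ) {m : M}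
    (hm : μ.mu m ≠ none) (hm' : μ'.mu m = none) : m ∈ mkt.menPreferring μ μ' := by
  obtain ⟨w, hw⟩ := Option.ne_none_iff_exists'.1 hm
  change mkt.mRank m (μ'.mu m) < mkt.mRank m (μ.mu m)
  rw [hm', hw]
  exact h.1 m w hw

theorem Stable.mu_eq_none (h : mkt.Stable μ) (h' : mkt.Stable μ')
    (hfin : {m | μ.mu m ≠ none}.Finite) {m : M} (hm : μ.mu m = none) : μ'.mu m = none := by
  by_contra hm'
  have hB : (mkt.womenPreferring μ μ').Finite := by
    refine (Matching.finite_nu_ne_none hfin).subset fun w hw ↦ ?_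
    obtain ⟨x, -, hx⟩ := h'.mapsTo_nu μ hw
    exact Option.ne_none_iff_exists.2 ⟨x, hx⟩
  have hsurj := Matching.surjOn_nu_of_mapsTo (h.mapsTo_mu μ') (h'.mapsTo_nu μ) hB
  obtain ⟨w, -, hw⟩ := hsurj (mem_image_of_mem some (h'.1.mem_menPreferring hm' hm))
  exact Option.some_ne_none w (((μ.consistent m w).2 hw).symm.trans hm)

theorem Stable.mu_eq_none_iff (h : mkt.Stable μ) (h' : mkt.Stable μ')
    (hfin : {m | μ.mu m ≠ none}.Finite) (m : M) : μ.mu m = none ↔ μ'.mu m = none :=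
  have hfin' : {m | μ'.mu m ≠ none}.Finite := hfin.subset fun _ ↦ mt (h.mu_eq_none h' hfin)
  ⟨h.mu_eq_none h' hfin, h'.mu_eq_none h hfin'⟩

end Market

theorem rural_hospital_general (mkt : Market M W) (μ μ' : Matching M W)
    (h : mkt.Stable μ) (h' : mkt.Stable μ') (hfin : {m | μ.mu m ≠ none}.Finite) :
    (∀ m : M, μ.mu m = none ↔ μ'.mu m = none) ∧
    (∀ w : W, μ.nu w = none ↔ μ'.nu w = none) :=
  ⟨h.mu_eq_none_iff h' hfin, h.swap.mu_eq_none_iff h'.swap (Matching.finite_nu_ne_none hfin)⟩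

/-- Rural hospital theorem (one-to-one case): every agent is
unmatched in one stable matching iff unmatched in any other. -/
theorem rural_hospital {M W : Type*} [Fintype M] [Fintype W]
    (mkt : Market M W) (μ μ' : Matching M W)
    (h : mkt.Stable μ) (h' : mkt.Stable μ') :
    (∀ m : M, μ.mu m = none ↔ μ'.mu m = none) ∧
    (∀ w : W, μ.nu w = none ↔ μ'.nu w = none) :=
  rural_hospital_general mkt μ μ' h h' (Set.toFinite _)
end
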